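/- Let a < b and let (N_j)_{j≥0} be a sequence of positive reals which is log-convex (N_j^2 ≤ N_{j-1} N_{j+1} for all j ≥ 1). Then there exists f ∈ C^∞([a,b]) such that max_{x∈[a,b]} |f^{(n)}(x)| ≤ 2^{n+2} N_n for all n ≥ 0 (in particular f belongs to the Denjoy–Carleman class C^N([a,b])) and |f^{(j)}((a+b)/2)| ≥ N_j for every j ≥ 0. -/

import Mathlib

open Set

/-- For a log-convex positive sequence, the ratios of consecutive terms increase. -/
theorem monotone_ratio_of_log_convex {N : ℕ → ℝ} (hNpos : ∀ j, 0 < N j)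
    (hlogconv : ∀ j : ℕ, 1 ≤ j → (N j) ^ 2 ≤ N (j - 1) * N (j + 1)) :
    Monotone fun k => N (k + 1) / N k := by
  refine monotone_nat_of_le_succ fun k => ?_
  have h := hlogconv (k + 1) (by omega)
  rw [Nat.add_sub_cancel] at h
  rw [div_le_div_iff₀ (hNpos _) (hNpos _)]
  nlinarith

/-- A log-convex positive sequence lies above each of its geometric tangents. -/
theorem mul_ratio_pow_le_of_log_convex {N : ℕ → ℝ} (hNpos : ∀ j, 0 < N j)
    (hlogconv : ∀ j : ℕ, 1 ≤ j → (N j) ^ 2 ≤ N (j - 1) * N (j + 1)) (k j : ℕ) :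
    N k * (N (k + 1) / N k) ^ j ≤ N j * (N (k + 1) / N k) ^ k := by
  have hmono := monotone_ratio_of_log_convex hNpos hlogconv
  have hpos : ∀ k, 0 < N (k + 1) / N k := fun k => div_pos (hNpos _) (hNpos _)
  have hstep : ∀ k, N (k + 1) = N k * (N (k + 1) / N k) := fun k =>
    (mul_div_cancel₀ _ (hNpos k).ne').symm
  set μ : ℕ → ℝ := fun k => N (k + 1) / N k with hμ
  change N k * μ k ^ j ≤ N j * μ k ^ k
  rcases le_total k j with h | h
  · obtain ⟨i, rfl⟩ := Nat.exists_eq_add_of_le h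
    have key : N k * μ k ^ i ≤ N (k + i) := by
      clear h
      induction i with
      | zero => simp
      | succ i ih =>
        calc N k * μ k ^ (i + 1) = (N k * μ k ^ i) * μ k := by ring
          _ ≤ N (k + i) * μ (k + i) :=
            mul_le_mul ih (hmono (by omega)) (hpos _).le (hNpos _).le
          _ = N (k + (i + 1)) := (hstep (k + i)).symm
    calc N k * μ k ^ (k + i) = (N k * μ k ^ i) * μ k ^ k := by ring
      _ ≤ N (k + i) * μ k ^ k := mul_le_mul_of_nonneg_right key (pow_pos (hpos k) k).le
  · obtain ⟨i, rfl⟩ := Nat.exists_eq_add_of_le h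
    have key : N (j + i) ≤ N j * μ (j + i) ^ i := by
      clear h
      induction i with
      | zero => simp
      | succ i ih =>
        have hle : μ (j + i) ≤ μ (j + (i + 1)) := hmono (by omega)
        calc N (j + (i + 1)) = N (j + i) * μ (j + i) := hstep (j + i)
          _ ≤ (N j * μ (j + i) ^ i) * μ (j + i) :=
            mul_le_mul_of_nonneg_right ih (hpos _).le
          _ = N j * μ (j + i) ^ (i + 1) := by ring
          _ ≤ N j * μ (j + (i + 1)) ^ (i + 1) :=
            mul_le_mul_of_nonneg_left (pow_le_pow_left₀ (hpos _).le hle _) (hNpos j).le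
    calc N (j + i) * μ (j + i) ^ j ≤ (N j * μ (j + i) ^ i) * μ (j + i) ^ j :=
          mul_le_mul_of_nonneg_right key (pow_pos (hpos _) j).le
      _ = N j * μ (j + i) ^ (j + i) := by ring

/-- The iterated derivatives of a rescaled `cos + sin` are obtained by quarter-period shifts. -/
theorem iteratedDeriv_const_mul_cos_add_sin (c l m : ℝ) (n : ℕ) :
    iteratedDeriv n (fun x => c * (Real.cos (l * (x - m)) + Real.sin (l * (x - m)))) =
      fun x => c * l ^ n * (Real.cos (l * (x - m) + n * (Real.pi / 2)) +
        Real.sin (l * (x - m) + n * (Real.pi / 2))) := by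
  induction n with
  | zero => simp
  | succ n ih =>
    rw [iteratedDeriv_succ, ih]
    funext x
    have hl : HasDerivAt (fun x => l * (x - m) + n * (Real.pi / 2)) (l * 1) x :=
      (((hasDerivAt_id x).sub_const m).const_mul l).add_const _
    refine ((hl.cos.add hl.sin).const_mul (c * l ^ n)).deriv.trans ?_
    have hs : l * (x - m) + ((n + 1 : ℕ) : ℝ) * (Real.pi / 2) =
        l * (x - m) + n * (Real.pi / 2) + Real.pi / 2 := by push_cast; ring
    rw [hs, Real.cos_add_pi_div_two, Real.sin_add_pi_div_two]
    ring

theorem abs_cos_add_sin_nat_mul_pi_div_two (n : ℕ) :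
    |Real.cos (n * (Real.pi / 2)) + Real.sin (n * (Real.pi / 2))| = 1 := by
  have h : Real.sin (2 * (n * (Real.pi / 2))) = 0 := by
    rw [show 2 * (n * (Real.pi / 2)) = n * Real.pi by ring]
    exact Real.sin_nat_mul_pi n
  rw [Real.sin_two_mul] at h
  rw [← sq_eq_sq₀ (abs_nonneg _) zero_le_one, sq_abs]
  nlinarith [Real.sin_sq_add_cos_sq (n * (Real.pi / 2))]

/-- **Lemma 2.** For every log-convex positive sequence `N` there is a function
`f ∈ C^N([a,b])` (with constant `2^(n+2)`) whose derivatives at the midpoint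
attain the bounds `N j`. -/
theorem exists_function_attaining_bounds
    (a b : ℝ) (hab : a < b)
    (N : ℕ → ℝ) (hNpos : ∀ j, 0 < N j)
    (hlogconv : ∀ j : ℕ, 1 ≤ j → (N j) ^ 2 ≤ N (j - 1) * N (j + 1)) :
    ∃ f : ℝ → ℝ, ContDiffOn ℝ (⊤ : ℕ∞) f (Icc a b) ∧
      (∀ n : ℕ, ∀ x ∈ Icc a b,
        |iteratedDerivWithin n f (Icc a b) x| ≤ 2 ^ (n + 2) * N n) ∧
      (∀ j : ℕ, N j ≤ |iteratedDerivWithin j f (Icc a b) ((a + b) / 2)|) := by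
  set m := (a + b) / 2 with hm
  set l : ℕ → ℝ := fun k => 2 * (N (k + 1) / N k) with hl
  set c : ℕ → ℝ := fun k => N k / l k ^ k with hc
  have hlpos : ∀ k, 0 < l k := fun k => mul_pos two_pos (div_pos (hNpos _) (hNpos _))
  have hcpos : ∀ k, 0 < c k := fun k => div_pos (hNpos k) (pow_pos (hlpos k) k)
  have hcl_pos : ∀ j k, 0 < c k * l k ^ j := fun j k => mul_pos (hcpos k) (pow_pos (hlpos k) j)
  have hcl : ∀ j k, c k * l k ^ j ≤ 2 ^ j * N j * (1 / 2) ^ k := by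
    intro j k
    have h := mul_ratio_pow_le_of_log_convex hNpos hlogconv k j
    have hμ : 0 < N (k + 1) / N k := div_pos (hNpos _) (hNpos _)
    simp only [hc, hl]
    generalize N (k + 1) / N k = μ at h hμ
    rw [div_mul_eq_mul_div, div_le_iff₀ (by positivity)]
    calc N k * (2 * μ) ^ j = 2 ^ j * (N k * μ ^ j) := by ring
      _ ≤ 2 ^ j * (N j * μ ^ k) := mul_le_mul_of_nonneg_left h (by positivity)
      _ = 2 ^ j * N j * ((1 / 2) * (2 * μ)) ^ k := by ring
      _ = 2 ^ j * N j * (1 / 2) ^ k * (2 * μ) ^ k := by rw [mul_pow (1 / 2 : ℝ)]; ring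
  have hsum_geom : ∀ j, HasSum (fun k : ℕ => 2 ^ j * N j * (1 / 2 : ℝ) ^ k) (2 ^ j * N j * 2) :=
    fun j => hasSum_geometric_two.mul_left _
  have hsum : ∀ j, Summable fun k => c k * l k ^ j := fun j =>
    (hsum_geom j).summable.of_nonneg_of_le (fun k => (hcl_pos j k).le) (hcl j)
  set g : ℕ → ℝ → ℝ := fun k x => c k * (Real.cos (l k * (x - m)) + Real.sin (l k * (x - m)))
    with hg
  have hgsmooth : ∀ k, ContDiff ℝ (⊤ : ℕ∞) (g k) := fun k => by
    simp only [hg]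
    fun_prop
  have hgderiv : ∀ k n, iteratedDeriv n (g k) = _ := fun k n =>
    iteratedDeriv_const_mul_cos_add_sin (c k) (l k) m n
  have hgbound : ∀ n k x, ‖iteratedDeriv n (g k) x‖ ≤ 2 * (c k * l k ^ n) := by
    intro n k x
    rw [hgderiv, norm_mul, Real.norm_of_nonneg (hcl_pos n k).le, mul_comm]
    refine mul_le_mul_of_nonneg_right ((norm_add_le _ _).trans ?_) (hcl_pos n k).le
    have h1 := Real.abs_cos_le_one (l k * (x - m) + n * (Real.pi / 2))
    have h2 := Real.abs_sin_le_one (l k * (x - m) + n * (Real.pi / 2))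
    simp only [Real.norm_eq_abs]
    linarith
  have hgbound' : ∀ (n k : ℕ) (x : ℝ), (n : ℕ∞) ≤ ⊤ →
      ‖iteratedFDeriv ℝ n (g k) x‖ ≤ 2 * (c k * l k ^ n) := fun n k x _ => by
    rw [norm_iteratedFDeriv_eq_norm_iteratedDeriv]
    exact hgbound n k x
  have hv : ∀ n : ℕ, (n : ℕ∞) ≤ ⊤ → Summable fun k => 2 * (c k * l k ^ n) :=
    fun n _ => (hsum n).mul_left 2
  have hfsmooth : ContDiff ℝ (⊤ : ℕ∞) (fun x => ∑' k, g k x) :=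
    contDiff_tsum hgsmooth hv hgbound'
  have hfderiv : ∀ n x, iteratedDeriv n (fun x => ∑' k, g k x) x =
      ∑' k, iteratedDeriv n (g k) x := by
    intro n x
    simp only [iteratedDeriv_eq_iteratedFDeriv]
    rw [iteratedFDeriv_tsum hgsmooth hv hgbound' le_top]
    refine ContinuousMultilinearMap.tsum_eval ?_ _
    exact .of_norm_bounded (hv n le_top) fun k => hgbound' n k x le_top
  have hwithin : ∀ n, ∀ x ∈ Icc a b,
      iteratedDerivWithin n (fun x => ∑' k, g k x) (Icc a b) x =
        ∑' k, iteratedDeriv n (g k) x := fun n x hx => by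
    rw [iteratedDerivWithin_eq_iteratedDeriv (uniqueDiffOn_Icc hab)
      (hfsmooth.of_le (by exact_mod_cast le_top)).contDiffAt hx, hfderiv]
  refine ⟨fun x => ∑' k, g k x, hfsmooth.contDiffOn, fun n x hx => ?_, fun j => ?_⟩
  · rw [hwithin n x hx, ← Real.norm_eq_abs]
    have hs : HasSum (fun k : ℕ => 2 * (2 ^ n * N n * (1 / 2 : ℝ) ^ k)) (2 * (2 ^ n * N n * 2)) :=
      (hsum_geom n).mul_left 2
    refine (tsum_of_norm_bounded hs fun k => ?_).trans_eq (by ring)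
    exact (hgbound n k x).trans (mul_le_mul_of_nonneg_left (hcl n k) two_pos.le)
  · rw [hwithin j m ⟨by linarith, by linarith⟩]
    simp only [hgderiv, sub_self, mul_zero, zero_add]
    rw [tsum_mul_right, abs_mul, abs_cos_add_sin_nat_mul_pi_div_two, mul_one]
    have hj : c j * l j ^ j = N j := div_mul_cancel₀ _ (pow_pos (hlpos j) j).ne'
    calc N j = c j * l j ^ j := hj.symm
      _ ≤ ∑' k, c k * l k ^ j := (hsum j).le_tsum j fun k _ => (hcl_pos j k).le
      _ ≤ _ := le_abs_self _
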